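/- Strong duality (necessity of regularity): if there exist τ ∈ Δ(Δ(Ω)) feasible for the primal problem (P) and P ∈ C(Ω) feasible for the dual problem (D) with ∫_Ω P(ω) dμ₀(ω) = ∫_{Δ(Ω)} V(μ) dτ(μ), then the persuasion problem is regular, i.e. the concave closure V̂ is superdifferentiable at μ₀. -/

import Mathlib

open MeasureTheory

/-- Convex combination `t μ + (1 - t) η` of two probability measures. -/
noncomputable def mix {Ω : Type*} [MeasurableSpace Ω] (t : NNReal) (ht : t ≤ 1)
    (μ η : ProbabilityMeasure Ω) : ProbabilityMeasure Ω :=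
  ⟨t • (μ : Measure Ω) + (1 - t) • (η : Measure Ω), by
    constructor
    simp only [Measure.coe_add, Pi.add_apply, Measure.smul_apply, smul_eq_mul,
      measure_univ, mul_one, ENNReal.smul_def]
    rw [← ENNReal.coe_add, add_tsub_cancel_of_le ht, ENNReal.coe_one]⟩

/-- A function `H : Δ(Ω) → ℝ` is affine if it respects convex combinations. -/
def IsAffine {Ω : Type*} [MeasurableSpace Ω] (H : ProbabilityMeasure Ω → ℝ) : Prop :=
  ∀ (μ η : ProbabilityMeasure Ω) (t : NNReal) (ht : t ≤ 1),
    H (mix t ht μ η) = (t : ℝ) * H μ + (1 - (t : ℝ)) * H η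

/-- The concave closure `V̂(μ) = inf {H(μ) : H affine continuous, H ≥ V}`. -/
noncomputable def concaveClosure {Ω : Type*} [MeasurableSpace Ω] [TopologicalSpace Ω]
    [OpensMeasurableSpace Ω] (V : ProbabilityMeasure Ω → ℝ) (μ : ProbabilityMeasure Ω) : ℝ :=
  sInf {r : ℝ | ∃ H : ProbabilityMeasure Ω → ℝ,
    Continuous H ∧ IsAffine H ∧ (∀ μ', V μ' ≤ H μ') ∧ r = H μ}

/-- The persuasion problem is regular if the concave closure `V̂` is superdifferentiable at
`μ₀`: there is an affine continuous `V̄` with `V̄(μ₀) = V̂(μ₀)` and `V̄ ≥ V̂` on `Δ(Ω)`. -/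
def RegularPersuasion {Ω : Type*} [MeasurableSpace Ω] [TopologicalSpace Ω]
    [OpensMeasurableSpace Ω] (V : ProbabilityMeasure Ω → ℝ) (μ₀ : ProbabilityMeasure Ω) : Prop :=
  ∃ Vbar : ProbabilityMeasure Ω → ℝ, Continuous Vbar ∧ IsAffine Vbar ∧
    Vbar μ₀ = concaveClosure V μ₀ ∧ ∀ μ, concaveClosure V μ ≤ Vbar μ

/-- `τ ∈ Δ(Δ(Ω))` is feasible for the primal problem (P) if its barycenter is `μ₀`. -/
def PrimalFeasible {Ω : Type*} [MeasurableSpace Ω] [TopologicalSpace Ω]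
    [MeasurableSpace (ProbabilityMeasure Ω)]
    (μ₀ : ProbabilityMeasure Ω) (τ : ProbabilityMeasure (ProbabilityMeasure Ω)) : Prop :=
  ∀ f : Ω → ℝ, Continuous f →
    ∫ μ, (∫ ω, f ω ∂(μ : Measure Ω)) ∂(τ : Measure (ProbabilityMeasure Ω))
      = ∫ ω, f ω ∂(μ₀ : Measure Ω)

/-- A continuous `P : Ω → ℝ` is feasible for the dual problem (D) if `∫ P dμ ≥ V μ` for all μ. -/
def DualFeasible {Ω : Type*} [MeasurableSpace Ω] [TopologicalSpace Ω]
    (V : ProbabilityMeasure Ω → ℝ) (P : Ω → ℝ) : Prop :=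
  Continuous P ∧ ∀ μ : ProbabilityMeasure Ω, V μ ≤ ∫ ω, P ω ∂(μ : Measure Ω)

/-!
Integration against the optimal price function `P` is the required supergradient: it is continuous,
affine and dominates `V`, so only its minimality at `μ₀` is at stake. If `H` is another continuous
affine majorant of `V`, then `∫ P dμ₀ = ∫ V dτ ≤ ∫ H dτ = H μ₀`. The last equality says that `H`
commutes with barycenters, and it holds because `H` is integration against `ω ↦ H(δ_ω)`: the two
functionals are continuous and affine and agree at the Dirac masses, whose mixtures are dense.
-/

open Topology BoundedContinuousFunction

section Mixtures

variable {Ω E : Type*} [MeasurableSpace Ω] [NormedAddCommGroup E] [NormedSpace ℝ E]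

lemma integral_mix {F : Ω → E} {μ η : ProbabilityMeasure Ω} (hμ : Integrable F μ)
    (hη : Integrable F η) (t : NNReal) (ht : t ≤ 1) :
    ∫ ω, F ω ∂(mix t ht μ η : Measure Ω) =
      (t : ℝ) • ∫ ω, F ω ∂(μ : Measure Ω) + (1 - (t : ℝ)) • ∫ ω, F ω ∂(η : Measure Ω) := by
  change ∫ ω, F ω ∂(t • (μ : Measure Ω) + (1 - t) • (η : Measure Ω)) = _
  rw [integral_add_measure hμ.smul_measure_nnreal hη.smul_measure_nnreal,
    integral_smul_nnreal_measure, integral_smul_nnreal_measure, NNReal.smul_def, NNReal.smul_def,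
    NNReal.coe_sub ht, NNReal.coe_one]

lemma isAffine_integral {f : Ω → ℝ} (hf : ∀ μ : ProbabilityMeasure Ω, Integrable f μ) :
    IsAffine fun μ : ProbabilityMeasure Ω ↦ ∫ ω, f ω ∂(μ : Measure Ω) :=
  fun μ η t ht ↦ integral_mix (hf μ) (hf η) t ht

/-- Convexity of a set of probability measures, expressed through `mix` because
`ProbabilityMeasure Ω` is not a real vector space, so that `Convex ℝ` does not apply. -/
def MixConvex (S : Set (ProbabilityMeasure Ω)) : Prop :=
  ∀ μ ∈ S, ∀ η ∈ S, ∀ (t : NNReal) (ht : t ≤ 1), mix t ht μ η ∈ S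

lemma IsAffine.mixConvex_setOf_eq {G H : ProbabilityMeasure Ω → ℝ} (hG : IsAffine G)
    (hH : IsAffine H) : MixConvex {μ | G μ = H μ} := by
  intro μ (hμ : G μ = H μ) η (hη : G η = H η) t ht
  change G (mix t ht μ η) = H (mix t ht μ η)
  rw [hG, hH, hμ, hη]

namespace MixConvex

variable {S : Set (ProbabilityMeasure Ω)}

lemma convex_image_integral (hS : MixConvex S) {F : Ω → E}
    (hF : ∀ ν : ProbabilityMeasure Ω, Integrable F ν) :
    Convex ℝ ((fun ν : ProbabilityMeasure Ω ↦ ∫ ω, F ω ∂(ν : Measure Ω)) '' S) := by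
  rintro _ ⟨μ, hμ, rfl⟩ _ ⟨η, hη, rfl⟩ a b ha hb hab
  obtain rfl : b = 1 - a := eq_sub_of_add_eq' hab
  have ha_le : a ≤ 1 := sub_nonneg.mp hb
  exact ⟨_, hS μ hμ η hη ⟨a, ha⟩ ha_le, integral_mix (hF μ) (hF η) _ _⟩

lemma integral_mem_closure_image [CompleteSpace E] (hS : MixConvex S)
    (hdirac : ∀ ω, diracProba ω ∈ S) {F : Ω → E} (hFm : StronglyMeasurable F)
    (hF : ∀ ν : ProbabilityMeasure Ω, Integrable F ν) (μ : ProbabilityMeasure Ω) :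
    ∫ ω, F ω ∂(μ : Measure Ω) ∈
      closure ((fun ν : ProbabilityMeasure Ω ↦ ∫ ω, F ω ∂(ν : Measure Ω)) '' S) :=
  (hS.convex_image_integral hF).closure.integral_mem isClosed_closure
    (ae_of_all _ fun ω ↦ subset_closure ⟨diracProba ω, hdirac ω, integral_dirac' F ω hFm⟩) (hF μ)

end MixConvex

end Mixtures

section WeakTopology

variable {Ω : Type*} [TopologicalSpace Ω] [MeasurableSpace Ω] [OpensMeasurableSpace Ω]

lemma isInducing_integral_boundedContinuousFunction :
    IsInducing fun (μ : ProbabilityMeasure Ω) (g : Ω →ᵇ ℝ) ↦ ∫ ω, g ω ∂(μ : Measure Ω) := by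
  refine isInducing_iff_nhds.mpr fun μ ↦ eq_of_forall_le_iff fun l ↦ ?_
  rw [← Filter.tendsto_id', ProbabilityMeasure.tendsto_iff_forall_integral_tendsto,
    ← Filter.tendsto_iff_comap, tendsto_pi_nhds]
  rfl

-- A basic weak neighbourhood tests only finitely many functions, and the vector of their
-- integrals lies in the closed convex hull of its values at the Dirac masses.
lemma MixConvex.dense {S : Set (ProbabilityMeasure Ω)} (hS : MixConvex S)
    (hdirac : ∀ ω, diracProba ω ∈ S) : Dense S := by
  rw [isInducing_integral_boundedContinuousFunction.dense_iff]
  refine fun μ ↦ mem_closure_iff.mpr fun U hU hμU ↦ ?_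
  obtain ⟨I, u, hu, hIU⟩ := isOpen_pi_iff.mp hU _ hμU
  let F : Ω → I → ℝ := fun ω g ↦ g.1 ω
  have hF (ν : ProbabilityMeasure Ω) : Integrable F ν := .of_eval fun g ↦ g.1.integrable ν
  have hF_eval (ν : ProbabilityMeasure Ω) (g : I) :
      (∫ ω, F ω ∂(ν : Measure Ω)) g = ∫ ω, g.1 ω ∂(ν : Measure Ω) := eval_integral (hF ν).eval g
  have hFm : StronglyMeasurable F :=
    (continuous_pi fun g : I ↦ g.1.continuous).stronglyMeasurable
  have hbox : IsOpen (Set.univ.pi fun g : I ↦ u g) :=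
    isOpen_set_pi Set.finite_univ fun g _ ↦ (hu g g.2).1
  have hμbox : ∫ ω, F ω ∂(μ : Measure Ω) ∈ Set.univ.pi fun g : I ↦ u g := fun g _ ↦ by
    rw [hF_eval]
    exact (hu g g.2).2
  obtain ⟨_, hνbox, ν, hνS, rfl⟩ :=
    mem_closure_iff.mp (hS.integral_mem_closure_image hdirac hFm hF μ) _ hbox hμbox
  refine ⟨_, hIU fun g hg ↦ ?_, ν, hνS, rfl⟩
  have hνg : (∫ ω, F ω ∂(ν : Measure Ω)) ⟨g, hg⟩ ∈ u g := hνbox ⟨g, hg⟩ trivial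
  rwa [hF_eval] at hνg

lemma IsAffine.ext_diracProba {G H : ProbabilityMeasure Ω → ℝ} (hG : IsAffine G)
    (hGc : Continuous G) (hH : IsAffine H) (hHc : Continuous H)
    (hdirac : ∀ ω, G (diracProba ω) = H (diracProba ω)) : G = H :=
  hGc.ext_on ((hG.mixConvex_setOf_eq hH).dense hdirac) hHc fun _ h ↦ h

end WeakTopology

section ConcaveClosure

variable {Ω : Type*} [TopologicalSpace Ω] [MeasurableSpace Ω] [OpensMeasurableSpace Ω]
  {V H : ProbabilityMeasure Ω → ℝ}

/-- `H` is one of the competitors in the infimum defining the concave closure of `V`. -/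
structure IsAffineMajorant (V H : ProbabilityMeasure Ω → ℝ) : Prop where
  continuous : Continuous H
  isAffine : IsAffine H
  le : ∀ μ, V μ ≤ H μ

lemma concaveClosure_le (h : IsAffineMajorant V H) (μ : ProbabilityMeasure Ω) :
    concaveClosure V μ ≤ H μ := by
  refine csInf_le ⟨V μ, ?_⟩ ⟨H, h.continuous, h.isAffine, h.le, rfl⟩
  rintro _ ⟨G, -, -, hVG, rfl⟩
  exact hVG μ

-- Without a majorant the infimum is over the empty set, and `sInf ∅ = 0`.
lemma le_concaveClosure (hV : ∃ H, IsAffineMajorant V H) {μ : ProbabilityMeasure Ω} {a : ℝ}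
    (ha : ∀ H, IsAffineMajorant V H → a ≤ H μ) : a ≤ concaveClosure V μ := by
  obtain ⟨H, hH⟩ := hV
  refine le_csInf ⟨_, H, hH.continuous, hH.isAffine, hH.le, rfl⟩ ?_
  rintro _ ⟨G, hGc, hG, hVG, rfl⟩
  exact ha G ⟨hGc, hG, hVG⟩

end ConcaveClosure

section Compact

variable {Ω : Type*} [TopologicalSpace Ω] [CompactSpace Ω] [MeasurableSpace Ω]
  [OpensMeasurableSpace Ω]

lemma integrable_of_continuous {f : Ω → ℝ} (hf : Continuous f) (μ : Measure Ω)
    [IsFiniteMeasure μ] : Integrable f μ :=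
  (mkOfCompact ⟨f, hf⟩).integrable μ

lemma continuous_integral_of_continuous {f : Ω → ℝ} (hf : Continuous f) :
    Continuous fun μ : ProbabilityMeasure Ω ↦ ∫ ω, f ω ∂(μ : Measure Ω) :=
  ProbabilityMeasure.continuous_integral_continuousMap (⟨f, hf⟩ : C(Ω, ℝ))

lemma DualFeasible.isAffineMajorant {V : ProbabilityMeasure Ω → ℝ} {P : Ω → ℝ}
    (hP : DualFeasible V P) :
    IsAffineMajorant V fun μ ↦ ∫ ω, P ω ∂(μ : Measure Ω) where
  continuous := continuous_integral_of_continuous hP.1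
  isAffine := isAffine_integral fun μ ↦ integrable_of_continuous hP.1 μ
  le := hP.2

lemma IsAffine.eq_integral_diracProba {H : ProbabilityMeasure Ω → ℝ} (hH : IsAffine H)
    (hHc : Continuous H) :
    H = fun μ : ProbabilityMeasure Ω ↦ ∫ ω, H (diracProba ω) ∂(μ : Measure Ω) := by
  have hδ : Continuous fun ω ↦ H (diracProba ω) := hHc.comp continuous_diracProba
  refine hH.ext_diracProba hHc (isAffine_integral fun μ ↦ integrable_of_continuous hδ μ)
    (continuous_integral_of_continuous hδ) fun ω ↦ ?_
  exact (integral_dirac' _ ω hδ.stronglyMeasurable).symm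

variable [MeasurableSpace (ProbabilityMeasure Ω)]

lemma PrimalFeasible.integral_eq_of_isAffine {μ₀ : ProbabilityMeasure Ω}
    {τ : ProbabilityMeasure (ProbabilityMeasure Ω)} (hτ : PrimalFeasible μ₀ τ)
    {H : ProbabilityMeasure Ω → ℝ} (hH : IsAffine H) (hHc : Continuous H) :
    ∫ μ, H μ ∂(τ : Measure (ProbabilityMeasure Ω)) = H μ₀ := by
  rw [hH.eq_integral_diracProba hHc]
  exact hτ _ (hHc.comp continuous_diracProba)

variable [OpensMeasurableSpace (ProbabilityMeasure Ω)]

lemma IsAffine.integrable_of_continuous {H : ProbabilityMeasure Ω → ℝ} (hH : IsAffine H)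
    (hHc : Continuous H) (τ : Measure (ProbabilityMeasure Ω)) [IsFiniteMeasure τ] :
    Integrable H τ := by
  let h : Ω →ᵇ ℝ := mkOfCompact ⟨fun ω ↦ H (diracProba ω), hHc.comp continuous_diracProba⟩
  refine .of_bound hHc.measurable.aestronglyMeasurable ‖h‖ (ae_of_all _ fun μ ↦ ?_)
  rw [hH.eq_integral_diracProba hHc]
  exact h.norm_integral_le_norm μ

lemma PrimalFeasible.integral_le_concaveClosure {μ₀ : ProbabilityMeasure Ω}
    {τ : ProbabilityMeasure (ProbabilityMeasure Ω)} (hτ : PrimalFeasible μ₀ τ)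
    {V : ProbabilityMeasure Ω → ℝ} (hV : ∃ H, IsAffineMajorant V H)
    (hVint : Integrable V (τ : Measure (ProbabilityMeasure Ω))) :
    ∫ μ, V μ ∂(τ : Measure (ProbabilityMeasure Ω)) ≤ concaveClosure V μ₀ :=
  le_concaveClosure hV fun H hH ↦
    calc ∫ μ, V μ ∂(τ : Measure (ProbabilityMeasure Ω))
      _ ≤ ∫ μ, H μ ∂(τ : Measure (ProbabilityMeasure Ω)) :=
        integral_mono hVint (hH.isAffine.integrable_of_continuous hH.continuous τ) hH.le
      _ = H μ₀ := hτ.integral_eq_of_isAffine hH.isAffine hH.continuous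

theorem regular_of_strong_duality_general (μ₀ : ProbabilityMeasure Ω)
    (V : ProbabilityMeasure Ω → ℝ) (τ : ProbabilityMeasure (ProbabilityMeasure Ω))
    (hτ : PrimalFeasible μ₀ τ) (hVint : Integrable V (τ : Measure (ProbabilityMeasure Ω)))
    (P : Ω → ℝ) (hP : DualFeasible V P)
    (heq : ∫ ω, P ω ∂(μ₀ : Measure Ω) = ∫ μ, V μ ∂(τ : Measure (ProbabilityMeasure Ω))) :
    RegularPersuasion V μ₀ := by
  have hmaj := hP.isAffineMajorant
  have hmin : ∫ ω, P ω ∂(μ₀ : Measure Ω) ≤ concaveClosure V μ₀ :=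
    heq.trans_le (hτ.integral_le_concaveClosure ⟨_, hmaj⟩ hVint)
  exact ⟨_, hmaj.continuous, hmaj.isAffine, hmin.antisymm (concaveClosure_le hmaj μ₀),
    concaveClosure_le hmaj⟩

end Compact

/-- **Strong duality, necessity** (Theorem 2, "only if" direction): if there are feasible `τ`
and `P` whose values coincide, then the persuasion problem is regular. -/
theorem regular_of_strong_duality
    {Ω : Type*} [MetricSpace Ω] [CompactSpace Ω] [MeasurableSpace Ω] [BorelSpace Ω]
    [MeasurableSpace (ProbabilityMeasure Ω)] [OpensMeasurableSpace (ProbabilityMeasure Ω)]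
    (μ₀ : ProbabilityMeasure Ω)
    (hfull : ∀ U : Set Ω, IsOpen U → U.Nonempty → 0 < (μ₀ : Measure Ω) U)
    (V : ProbabilityMeasure Ω → ℝ) (hV : UpperSemicontinuous V)
    (τ : ProbabilityMeasure (ProbabilityMeasure Ω))
    (hτ : PrimalFeasible μ₀ τ)
    (hVint : Integrable V (τ : Measure (ProbabilityMeasure Ω)))
    (P : Ω → ℝ) (hP : DualFeasible V P)
    (heq : ∫ ω, P ω ∂(μ₀ : Measure Ω) = ∫ μ, V μ ∂(τ : Measure (ProbabilityMeasure Ω))) :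
    RegularPersuasion V μ₀ :=
  regular_of_strong_duality_general μ₀ V τ hτ hVint P hP heq
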